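/- Suppose u : ℝ × ℝᵈ → ℝ satisfies: (i) for every t, the function x ↦ u(t, x) is a Schwartz function on ℝᵈ, is nonnegative, and satisfies ∫_{ℝᵈ} u(t, x) dx = 1; (ii) u is differentiable in t at every point and the Fokker–Planck equation holds pointwise; (iii) for all i, j ∈ {1, …, d}, the functions t ↦ ∫_{ℝᵈ} x_i u(t, x) dx and t ↦ ∫_{ℝᵈ} x_i x_j u(t, x) dx are differentiable with derivatives ∫_{ℝᵈ} x_i ∂_t u(t, x) dx and ∫_{ℝᵈ} x_i x_j ∂_t u(t, x) dx respectively. Define X̄_i(t) = ∫_{ℝᵈ} x_i u(t, x) dx and the covariance C_{ij}(t) = ∫_{ℝᵈ} (x_i − X̄_i(t))(x_j − X̄_j(t)) u(t, x) dx. Then for every t ∈ ℝ and all i, j ∈ {1, …, d}: d/dt C_{ij}(t) = −2(1 + α) C_{ij}(t) + (α/d) ∑_{k=1}^d ( C_{kj}(t) + C_{ki}(t) ) + 2D δ_{ij}, where δ_{ij} is the Kronecker delta. -/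

import Mathlib

/-!
Testing the Fokker–Planck equation against a function `φ` of temperate growth and integrating by
parts (once in the drift term, twice in the diffusion term) gives
`∫ φ ∂ₜu = ∑ₘ (∫ (∂ₘφ) u hₘ + D ∫ (∂ₘ²φ) u)`, see `integral_mul_fokkerPlanck`; there are no boundary
terms because `u` is a Schwartz function in space. Since the drift is affine, taking `φ = xᵢ` and
`φ = xᵢ xⱼ` closes the system on the moments `Xᵢ = ∫ xᵢ u` and `Mᵢⱼ = ∫ xᵢ xⱼ u`, where `∫ u = 1`
is used for the moment of order zero. The covariance is `Cᵢⱼ = Mᵢⱼ - Xᵢ Xⱼ`, so its derivative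
follows from the product rule, and the contributions of `a` cancel.
-/

open MeasureTheory

lemma coord_hasTemperateGrowth {d : ℕ} (i : Fin d) :
    (fun x : EuclideanSpace ℝ (Fin d) => x i).HasTemperateGrowth :=
  (EuclideanSpace.proj (𝕜 := ℝ) i).hasTemperateGrowth

lemma fderiv_coord {d : ℕ} (i m : Fin d) (x : EuclideanSpace ℝ (Fin d)) :
    fderiv ℝ (fun y : EuclideanSpace ℝ (Fin d) => y i) x (EuclideanSpace.single m 1)
      = if m = i then 1 else 0 := by
  have h : HasFDerivAt (fun y : EuclideanSpace ℝ (Fin d) => y i)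
      (EuclideanSpace.proj (𝕜 := ℝ) i) x := (EuclideanSpace.proj (𝕜 := ℝ) i).hasFDerivAt
  rw [h.fderiv]
  simp [eq_comm]

lemma fderiv_coord_mul_coord {d : ℕ} (i j m : Fin d) (x : EuclideanSpace ℝ (Fin d)) :
    fderiv ℝ (fun y : EuclideanSpace ℝ (Fin d) => y i * y j) x (EuclideanSpace.single m 1)
      = (if m = i then 1 else 0) * x j + (if m = j then 1 else 0) * x i := by
  have hd : ∀ i : Fin d, DifferentiableAt ℝ (fun y : EuclideanSpace ℝ (Fin d) => y i) x :=
    fun i => (coord_hasTemperateGrowth i).1.differentiable (by simp) x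
  rw [fderiv_fun_mul (hd i) (hd j)]
  simp only [add_apply, smul_apply, fderiv_coord, smul_eq_mul]
  ring

lemma integrable_mul_schwartz {d : ℕ} {f : EuclideanSpace ℝ (Fin d) → ℝ}
    (hf : f.HasTemperateGrowth) (g : SchwartzMap (EuclideanSpace ℝ (Fin d)) ℝ) :
    Integrable (fun x => f x * g x) := by
  have := (SchwartzMap.smulLeftCLM ℝ f g).integrable (μ := volume)
  simpa [SchwartzMap.smulLeftCLM_apply hf] using this

/-- The directional derivative of a Schwartz function, again as a Schwartz function. -/
lemma exists_schwartz_fderiv {d : ℕ} (g : SchwartzMap (EuclideanSpace ℝ (Fin d)) ℝ)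
    (v : EuclideanSpace ℝ (Fin d)) :
    ∃ g' : SchwartzMap (EuclideanSpace ℝ (Fin d)) ℝ, ∀ x, g' x = fderiv ℝ g x v :=
  ⟨LineDeriv.lineDerivOp v g, fun x => SchwartzMap.lineDerivOp_apply_eq_fderiv v g x⟩

/-- Integration by parts of a Schwartz function against a function of temperate growth. -/
lemma integral_mul_fderiv_schwartz {d : ℕ} {f p : EuclideanSpace ℝ (Fin d) → ℝ}
    (hf : f.HasTemperateGrowth) (hp : p.HasTemperateGrowth) (v : EuclideanSpace ℝ (Fin d))
    (hfp : ∀ x, fderiv ℝ f x v = p x) (g : SchwartzMap (EuclideanSpace ℝ (Fin d)) ℝ) :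
    ∫ x, f x * fderiv ℝ g x v = -∫ x, p x * g x := by
  obtain ⟨g', hg'⟩ := exists_schwartz_fderiv g v
  simp_rw [← hfp]
  refine integral_mul_fderiv_eq_neg_fderiv_mul_of_integrable ?_ ?_ (integrable_mul_schwartz hf g)
    (fun x _ => hf.1.differentiable (by simp) x) (fun x _ => g.differentiableAt)
  · simpa only [hfp] using integrable_mul_schwartz hp g
  · simpa only [← hg'] using integrable_mul_schwartz hf g'

/-- The weak form of the Fokker–Planck operator with drift `H`, tested against a function `φ` with
first partial derivatives `p m` and second partial derivatives `q m`. -/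
lemma integral_mul_fokkerPlanck {d : ℕ} (D : ℝ) {H : EuclideanSpace ℝ (Fin d) → Fin d → ℝ}
    (hH : ∀ m, (fun x => H x m).HasTemperateGrowth)
    {φ : EuclideanSpace ℝ (Fin d) → ℝ} {p q : Fin d → EuclideanSpace ℝ (Fin d) → ℝ}
    (hφ : φ.HasTemperateGrowth) (hp : ∀ m, (p m).HasTemperateGrowth)
    (hq : ∀ m, (q m).HasTemperateGrowth)
    (hφp : ∀ m x, fderiv ℝ φ x (EuclideanSpace.single m 1) = p m x)
    (hpq : ∀ m x, fderiv ℝ (p m) x (EuclideanSpace.single m 1) = q m x)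
    (g : SchwartzMap (EuclideanSpace ℝ (Fin d)) ℝ) :
    ∫ x, φ x * ∑ m, (-(fderiv ℝ (fun y => g y * H y m) x (EuclideanSpace.single m 1))
        + D * fderiv ℝ (fun y => fderiv ℝ (fun z => g z) y (EuclideanSpace.single m 1)) x
            (EuclideanSpace.single m 1))
      = ∑ m, ((∫ x, p m x * (H x m * g x)) + D * ∫ x, q m x * g x) := by
  have key : ∀ m, Integrable (fun x => φ x *
        (-(fderiv ℝ (fun y => g y * H y m) x (EuclideanSpace.single m 1))
        + D * fderiv ℝ (fun y => fderiv ℝ (fun z => g z) y (EuclideanSpace.single m 1)) x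
            (EuclideanSpace.single m 1)))
      ∧ ∫ x, φ x * (-(fderiv ℝ (fun y => g y * H y m) x (EuclideanSpace.single m 1))
        + D * fderiv ℝ (fun y => fderiv ℝ (fun z => g z) y (EuclideanSpace.single m 1)) x
            (EuclideanSpace.single m 1))
        = (∫ x, p m x * (H x m * g x)) + D * ∫ x, q m x * g x := by
    intro m
    obtain ⟨w, hw⟩ : ∃ w : SchwartzMap (EuclideanSpace ℝ (Fin d)) ℝ,
        ∀ x, w x = H x m * g x :=
      ⟨SchwartzMap.smulLeftCLM ℝ (fun x => H x m) g, fun x => by simp [hH m]⟩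
    obtain ⟨w', hw'⟩ := exists_schwartz_fderiv w (EuclideanSpace.single m 1)
    obtain ⟨g', hg'⟩ := exists_schwartz_fderiv g (EuclideanSpace.single m 1)
    obtain ⟨g₂, hg₂⟩ := exists_schwartz_fderiv g' (EuclideanSpace.single m 1)
    have e1 : (fun y => g y * H y m) = w := by
      funext y; rw [hw, mul_comm]
    have e2 : (fun y => fderiv ℝ (fun z => g z) y (EuclideanSpace.single m 1)) = g' := by
      funext y; rw [hg']
    have I1 := integrable_mul_schwartz hφ w'
    have I2 := integrable_mul_schwartz hφ g₂
    have P1 := integral_mul_fderiv_schwartz hφ (hp m) _ (hφp m) w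
    have P2 := integral_mul_fderiv_schwartz hφ (hp m) _ (hφp m) g'
    have P3 := integral_mul_fderiv_schwartz (hp m) (hq m) _ (hpq m) g
    rw [e1, e2]
    simp only [← hw', ← hg₂, ← hg', hw] at P1 P2 P3 ⊢
    have e3 : (fun x => φ x * (-w' x + D * g₂ x))
        = fun x => -(φ x * w' x) + D * (φ x * g₂ x) := by
      funext x; ring
    have I3 : Integrable (fun x => -(φ x * w' x)) := I1.neg
    rw [e3]
    refine ⟨I3.add (I2.const_mul D), ?_⟩
    rw [integral_add I3 (I2.const_mul D), integral_neg, integral_const_mul, P1, P2, P3]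
    ring
  simp_rw [Finset.mul_sum]
  rw [integral_finsetSum _ fun m _ => (key m).1]
  exact Finset.sum_congr rfl fun m _ => (key m).2

/-- The integral of the affine drift against `f u`, in terms of the integrals of `f u` and
`f xₖ u`. -/
lemma integral_mul_drift {d : ℕ} (b c : ℝ) (m : Fin d) {f : EuclideanSpace ℝ (Fin d) → ℝ}
    (hf : f.HasTemperateGrowth) (g : SchwartzMap (EuclideanSpace ℝ (Fin d)) ℝ) :
    ∫ x, f x * ((b - x m + c * ∑ k, (x k - x m)) * g x)
      = b * (∫ x, f x * g x) - (∫ x, f x * x m * g x)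
        + c * ∑ k, ((∫ x, f x * x k * g x) - ∫ x, f x * x m * g x) := by
  have I0 := integrable_mul_schwartz hf g
  have I1 : ∀ k, Integrable (fun x : EuclideanSpace ℝ (Fin d) => f x * x k * g x) :=
    fun k => integrable_mul_schwartz (hf.mul (coord_hasTemperateGrowth k)) g
  have I2 : ∀ k ∈ Finset.univ, Integrable
      (fun x : EuclideanSpace ℝ (Fin d) => f x * x k * g x - f x * x m * g x) :=
    fun k _ => (I1 k).sub (I1 m)
  have e : (fun x : EuclideanSpace ℝ (Fin d) =>
        f x * ((b - x m + c * ∑ k, (x k - x m)) * g x))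
      = fun x => (b * (f x * g x) - f x * x m * g x)
        + c * ∑ k, (f x * x k * g x - f x * x m * g x) := by
    funext x
    have : ∑ k, (f x * x k * g x - f x * x m * g x) = f x * (∑ k, (x k - x m)) * g x := by
      rw [Finset.mul_sum, Finset.sum_mul]
      exact Finset.sum_congr rfl fun k _ => by ring
    rw [this]; ring
  have I3 : Integrable (fun x : EuclideanSpace ℝ (Fin d) => b * (f x * g x) - f x * x m * g x) :=
    (I0.const_mul b).sub (I1 m)
  rw [e, integral_add I3 ((integrable_finsetSum _ I2).const_mul c),
    integral_sub (I0.const_mul b) (I1 m), integral_const_mul, integral_const_mul,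
    integral_finsetSum _ I2]
  congr 3
  exact funext fun k => integral_sub (I1 k) (I1 m)

/-- evolution of the covariance of the solution of the Fokker–Planck equation
for interacting particles in a (moving) harmonic trap. -/
theorem stmt_10 (d : ℕ) (hd : 1 ≤ d) (α D : ℝ) (hD : 0 < D)
    (a : ℝ → ℝ) (ha : Continuous a)
    (h : ℝ → EuclideanSpace ℝ (Fin d) → Fin d → ℝ)
    (hh : ∀ t x i, h t x i = a t - x i + (α / d) * ∑ j, (x j - x i))
    (u : ℝ → SchwartzMap (EuclideanSpace ℝ (Fin d)) ℝ)
    (hpos : ∀ t x, 0 ≤ u t x)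
    (hnorm : ∀ t, ∫ x, u t x = 1)
    (hFP : ∀ t x, HasDerivAt (fun s => u s x)
      (∑ i, (-(fderiv ℝ (fun y => u t y * h t y i) x (EuclideanSpace.single i 1))
        + D * fderiv ℝ (fun y => fderiv ℝ (fun z => u t z) y (EuclideanSpace.single i 1)) x
            (EuclideanSpace.single i 1))) t)
    (hmoment1 : ∀ t i, HasDerivAt (fun s => ∫ x, x i * u s x)
      (∫ x : EuclideanSpace ℝ (Fin d), x i * deriv (fun s => u s x) t) t)
    (hmoment2 : ∀ t i j, HasDerivAt (fun s => ∫ x, x i * x j * u s x)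
      (∫ x : EuclideanSpace ℝ (Fin d), x i * x j * deriv (fun s => u s x) t) t)
    (Xbar : ℝ → Fin d → ℝ)
    (hXbar : ∀ t i, Xbar t i = ∫ x : EuclideanSpace ℝ (Fin d), x i * u t x)
    (C : ℝ → Matrix (Fin d) (Fin d) ℝ)
    (hC : ∀ t i j, C t i j =
      ∫ x : EuclideanSpace ℝ (Fin d), (x i - Xbar t i) * (x j - Xbar t j) * u t x) :
    ∀ t i j, HasDerivAt (fun s => C s i j)
      (-2 * (1 + α) * C t i j + (α / d) * ∑ k, (C t k j + C t k i)
        + 2 * D * (if i = j then (1:ℝ) else 0)) t := by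
  intro t i j
  have hx := fun i : Fin d => coord_hasTemperateGrowth i
  have hsum : ∀ t, ∫ x, (fun _ => (1 : ℝ)) x * u t x = 1 := by simpa using hnorm
  have hH : ∀ t m, (fun x => h t x m).HasTemperateGrowth := by
    intro t m
    simp only [hh]
    have := hx
    fun_prop
  have hdt : ∀ x, deriv (fun s => u s x) t = _ := fun x => (hFP t x).deriv
  set M : ℝ → Fin d → Fin d → ℝ :=
    fun s i j => ∫ x : EuclideanSpace ℝ (Fin d), x i * x j * u s x with hM
  have hMsymm : ∀ i j, M t i j = M t j i := fun i j => by simp only [hM, mul_comm]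
  have hCM : ∀ s i j, C s i j = M s i j - Xbar s i * Xbar s j := by
    intro s i j
    have I0 := (u s).integrable (μ := volume)
    have I1 := fun i => integrable_mul_schwartz (hx i) (u s)
    have I2 := integrable_mul_schwartz ((hx i).fun_mul (hx j)) (u s)
    have e : (fun x : EuclideanSpace ℝ (Fin d) =>
          (x i - Xbar s i) * (x j - Xbar s j) * u s x)
        = fun x => (x i * x j * u s x - Xbar s j * (x i * u s x))
          - (Xbar s i * (x j * u s x) - Xbar s i * Xbar s j * u s x) := by
      funext x; ring
    have I3 : Integrable (fun x : EuclideanSpace ℝ (Fin d) =>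
        x i * x j * u s x - Xbar s j * (x i * u s x)) := I2.sub ((I1 i).const_mul _)
    have I4 : Integrable (fun x : EuclideanSpace ℝ (Fin d) =>
        Xbar s i * (x j * u s x) - Xbar s i * Xbar s j * u s x) :=
      ((I1 j).const_mul _).sub (I0.const_mul _)
    rw [hC, e, integral_sub I3 I4, integral_sub ((I1 j).const_mul _) (I0.const_mul _),
      integral_sub I2 ((I1 i).const_mul _)]
    simp only [integral_const_mul, ← hXbar, hnorm, hM]
    ring
  have hX' : ∀ i, HasDerivAt (fun s => Xbar s i)
      (a t - Xbar t i + (α / d) * ∑ k, (Xbar t k - Xbar t i)) t := by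
    intro i
    have h1 := hmoment1 t i
    simp only [hdt] at h1
    rw [integral_mul_fokkerPlanck D (hH t) (p := fun m _ => if m = i then 1 else 0)
      (q := fun _ _ => 0) (hx i) (fun m => by fun_prop) (fun m => by fun_prop)
      (fun m x => fderiv_coord i m x) (fun m x => by simp) (u t)] at h1
    have h2 := integral_mul_drift (a t) (α / d) i
      (f := fun _ => 1) (by fun_prop) (u t)
    rw [hsum] at h2
    simp only [one_mul, ← hXbar, mul_one, ← hh] at h2
    simp only [integral_const_mul, zero_mul, integral_zero, mul_zero, add_zero] at h1
    simp only [ite_mul, one_mul, zero_mul, Finset.sum_ite_eq', Finset.mem_univ, if_true, h2, ← hXbar] at h1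
    exact h1
  have hM' : HasDerivAt (fun s => M s i j)
      ((a t * Xbar t j - M t j i + (α / d) * ∑ k, (M t j k - M t j i))
        + (a t * Xbar t i - M t i j + (α / d) * ∑ k, (M t i k - M t i j))
        + 2 * D * (if i = j then (1:ℝ) else 0)) t := by
    have h1 := hmoment2 t i j
    simp only [hdt] at h1
    have hp : ∀ m, (fun x : EuclideanSpace ℝ (Fin d) =>
        (if m = i then (1:ℝ) else 0) * x j + (if m = j then 1 else 0) * x i).HasTemperateGrowth := by
      intro m
      have := hx
      fun_prop
    have hpq : ∀ m x, fderiv ℝ (fun x : EuclideanSpace ℝ (Fin d) =>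
        (if m = i then (1:ℝ) else 0) * x j + (if m = j then 1 else 0) * x i) x
          (EuclideanSpace.single m 1)
        = if m = i then (2 * if i = j then 1 else 0) else 0 := by
      intro m x
      have hd : ∀ i : Fin d, DifferentiableAt ℝ (fun y : EuclideanSpace ℝ (Fin d) => y i) x :=
        fun i => (hx i).1.differentiable (by simp) x
      rw [fderiv_fun_add ((hd j).const_mul _) ((hd i).const_mul _), fderiv_const_mul (hd j),
        fderiv_const_mul (hd i)]
      simp only [add_apply, smul_apply, fderiv_coord, smul_eq_mul]
      by_cases h1 : m = i
      · subst h1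
        by_cases h2 : m = j <;> simp [h2]
        norm_num
      · simp [h1]
    rw [integral_mul_fokkerPlanck D (hH t)
      (p := fun m x => (if m = i then (1:ℝ) else 0) * x j + (if m = j then 1 else 0) * x i)
      (q := fun m _ => if m = i then (2 * if i = j then 1 else 0) else 0)
      ((hx i).fun_mul (hx j)) hp (fun m => by fun_prop)
      (fun m x => fderiv_coord_mul_coord i j m x) hpq (u t)] at h1
    have h2 := fun i m => integral_mul_drift (a t) (α / d) m (hx i) (u t)
    simp only [← hXbar, ← hh] at h2
    have h3 : ∀ m, ∫ x : EuclideanSpace ℝ (Fin d),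
        ((if m = i then (1:ℝ) else 0) * x j + (if m = j then 1 else 0) * x i) * (h t x m * u t x)
        = (if m = i then ∫ x : EuclideanSpace ℝ (Fin d), x j * (h t x m * u t x) else 0)
          + if m = j then ∫ x : EuclideanSpace ℝ (Fin d), x i * (h t x m * u t x) else 0 := by
      intro m
      have I : ∀ i, Integrable
          (fun x : EuclideanSpace ℝ (Fin d) => x i * (h t x m * u t x)) := fun i => by
        simpa [mul_assoc] using integrable_mul_schwartz ((hx i).fun_mul (hH t m)) (u t)
      simp only [add_mul, mul_assoc]
      rw [integral_add ((I j).const_mul _) ((I i).const_mul _), integral_const_mul,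
        integral_const_mul]
      simp
    simp only [h3, integral_const_mul, hnorm, Finset.sum_add_distrib, Finset.sum_ite_eq',
      Finset.mem_univ, if_true, h2, ← Finset.mul_sum, mul_one] at h1
    convert! h1 using 1
    ring
  have hC' := hM'.sub ((hX' i).mul (hX' j))
  have hfun : (fun s => C s i j) = fun s => M s i j - Xbar s i * Xbar s j :=
    funext fun s => hCM s i j
  rw [hfun]
  refine hC'.congr_deriv ?_
  simp only [hCM, Finset.sum_sub_distrib, Finset.sum_add_distrib, Finset.sum_const,
    Finset.card_univ, Fintype.card_fin, nsmul_eq_mul, ← Finset.sum_mul]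
  have hMs : ∀ i, ∑ k, M t k i = ∑ k, M t i k :=
    fun i => Finset.sum_congr rfl fun k _ => hMsymm k i
  rw [hMs i, hMs j, hMsymm j i]
  -- `d ≠ 0` turns the `d` equal terms of the interaction sum into `(α / d) * d = α`.
  have hd0 : (d : ℝ) ≠ 0 := by
    have : d ≠ 0 := by omega
    exact_mod_cast this
  field_simp
  ring
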